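/- Any injective quasinilpotent bounded linear operator T with dense range acting on a separable infinite-dimensional complex Banach space is algebraically similar to the Volterra operator acting on C[0,1]. -/

import Mathlib

open MeasureTheory Set

/-- The Volterra operator on `C[0,1]` (complex-valued): `(V f)(x) = ∫_0^x f(t) dt`. -/
noncomputable def volterra : C(Set.Icc (0:ℝ) 1, ℂ) →ₗ[ℂ] C(Set.Icc (0:ℝ) 1, ℂ) where
  toFun f :=
    ⟨fun x => ∫ t in (0:ℝ)..(x : ℝ), f (Set.projIcc 0 1 zero_le_one t),
      (intervalIntegral.continuous_primitive
        (fun a b => (f.continuous.comp continuous_projIcc).intervalIntegrable a b) 0).comp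
        continuous_subtype_val⟩
  map_add' f g := by
    ext x
    simp only [ContinuousMap.coe_mk, ContinuousMap.add_apply]
    exact intervalIntegral.integral_add
      ((f.continuous.comp continuous_projIcc).intervalIntegrable _ _)
      ((g.continuous.comp continuous_projIcc).intervalIntegrable _ _)
  map_smul' c f := by
    ext x
    simp only [ContinuousMap.coe_mk, ContinuousMap.smul_apply, RingHom.id_apply]
    exact intervalIntegral.integral_smul c _

/-- A linear operator on a complex vector space is quasinilpotent if its spectrum is
contained in `{0}`, i.e. `T - z • id` is bijective for every nonzero `z`. -/
def IsQuasinilpotentOp {X : Type*} [AddCommGroup X] [Module ℂ X] (T : X →ₗ[ℂ] X) : Prop :=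
  ∀ z : ℂ, z ≠ 0 → Function.Bijective fun x => T x - z • x

/-!
View `X` as a `ℂ[z]`-module through `T`. On the hyperrange `D = ⋂ₙ range Tⁿ` the operator has empty
spectrum, so `D` is a vector space over `ℂ(z)`; it is an injective module, hence there is a
retraction of `X` onto `D` that commutes with `T`. A left inverse of `T` expands vectors formally as
`x₀ + T x₁ + T² x₂ + ⋯`; the map to the coefficients in `X ⧸ range T` intertwines `T` with a right
shift and has kernel `D`. Every sequence of coefficients occurs because `lim¹` of the tower
`⋯ → X → X → X` vanishes, by a Mittag-Leffler argument from the density of `range T²` in `range T`.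
So `T` is similar to `T|_D` times the right shift on sequences in `X ⧸ range T`, and is determined
by the two dimensions `dim_{ℂ(z)} D` and `dim_ℂ (X ⧸ range T)`.

Both are at most the cardinality `𝔠` of `X`, and both are at least `𝔠` because `ℓ^∞ / c₀` has
dimension at least `𝔠`. For `D`, apply the power series in `T` with bounded coefficients to a
nonzero vector of `D`; such a series `a₀ + T b` is injective when `a₀ ≠ 0`, because `T b` is
quasinilpotent. For the cokernel, `range T` is not closed, and a gliding hump gives vectors `T uₙ`
such that `∑ aₙ T uₙ ∈ range T` forces `aₙ → 0`.
-/

open Polynomial Cardinal Filter Topology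
open scoped nonZeroDivisors NNReal BoundedContinuousFunction

universe u v w

section DivisibleModules

variable {R : Type u} {M : Type v} {N : Type w} [CommRing R]
  [AddCommGroup M] [Module R M] [AddCommGroup N] [Module R N]

theorem baer_of_smul_surjective [IsPrincipalIdealRing R]
    (h : ∀ r : R, r ≠ 0 → Function.Surjective fun x : M => r • x) : Module.Baer R M := by
  intro I g
  obtain ⟨r, rfl⟩ := (IsPrincipalIdealRing.principal I).principal
  rcases eq_or_ne r 0 with rfl | hr0
  · refine ⟨0, fun x hx => ?_⟩
    obtain rfl : x = 0 := by simpa using hx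
    exact (map_zero g).symm
  · obtain ⟨q, hq⟩ := h r hr0 (g ⟨r, Submodule.mem_span_singleton_self r⟩)
    refine ⟨LinearMap.toSpanSingleton R M q, fun x hx => ?_⟩
    obtain ⟨s, rfl⟩ := Submodule.mem_span_singleton.1 hx
    calc (s • r) • q = s • r • q := smul_assoc s r q
      _ = s • g ⟨r, Submodule.mem_span_singleton_self r⟩ := congrArg (s • ·) hq
      _ = g ⟨s • r, hx⟩ := (map_smul g s _).symm

theorem isLocalizedModule_id_of_smul_bijective {S : Submonoid R}
    (h : ∀ r ∈ S, Function.Bijective fun x : M => r • x) :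
    IsLocalizedModule S (LinearMap.id : M →ₗ[R] M) where
  map_units r := (Module.End.isUnit_iff _).2 (h r r.2)
  surj y := ⟨(y, 1), by simp⟩
  exists_of_eq h := ⟨1, by simpa using h⟩

theorem nonempty_linearEquiv_of_smul_bijective [IsDomain R]
    (hM : ∀ r : R, r ≠ 0 → Function.Bijective fun x : M => r • x)
    (hN : ∀ r : R, r ≠ 0 → Function.Bijective fun x : N => r • x)
    (hrank : lift.{w} (Module.rank R M) = lift.{v} (Module.rank R N)) :
    Nonempty (M ≃ₗ[R] N) := by
  have := isLocalizedModule_id_of_smul_bijective fun r (hr : r ∈ R⁰) =>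
    hM r (nonZeroDivisors.ne_zero hr)
  have := isLocalizedModule_id_of_smul_bijective fun r (hr : r ∈ R⁰) =>
    hN r (nonZeroDivisors.ne_zero hr)
  let eM : LocalizedModule R⁰ M ≃ₗ[R] M := IsLocalizedModule.iso R⁰ LinearMap.id
  let eN : LocalizedModule R⁰ N ≃ₗ[R] N := IsLocalizedModule.iso R⁰ LinearMap.id
  obtain ⟨f⟩ := nonempty_linearEquiv_of_lift_rank_eq (R := FractionRing R)
    (M := LocalizedModule R⁰ M) (M' := LocalizedModule R⁰ N) <| by
      rw [IsFractionRing.rank_right_eq R (FractionRing R),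
        IsFractionRing.rank_right_eq R (FractionRing R)]
      have hlM : Module.rank R (LocalizedModule R⁰ M) = lift.{u} (Module.rank R M) := by
        rw [← lift_id'.{v, u} (Module.rank R (LocalizedModule R⁰ M)), eM.lift_rank_eq,
          lift_umax.{v, u}]
      have hlN : Module.rank R (LocalizedModule R⁰ N) = lift.{u} (Module.rank R N) := by
        rw [← lift_id'.{w, u} (Module.rank R (LocalizedModule R⁰ N)), eN.lift_rank_eq,
          lift_umax.{w, u}]
      simpa only [hlM, hlN, lift_lift] using congrArg lift.{u} hrank
  exact ⟨eM.symm ≪≫ₗ f.restrictScalars R ≪≫ₗ eN⟩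

end DivisibleModules

section Similarity

variable {K X Y Z W : Type*} [Field K]
  [AddCommGroup X] [Module K X] [AddCommGroup Y] [Module K Y]
  [AddCommGroup Z] [Module K Z] [AddCommGroup W] [Module K W]
  {T : Module.End K X} {S : Module.End K Y} {A : Module.End K Z} {B : Module.End K W}

/-- Algebraic similarity of operators: they are intertwined by a linear bijection, on which no
continuity is imposed. -/
def AlgebraicallySimilar (T : Module.End K X) (S : Module.End K Y) : Prop :=
  ∃ G : X ≃ₗ[K] Y, ∀ x, G (T x) = S (G x)

namespace AlgebraicallySimilar

theorem symm : AlgebraicallySimilar T S → AlgebraicallySimilar S T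
  | ⟨G, hG⟩ => ⟨G.symm, fun y => by rw [G.symm_apply_eq, hG, G.apply_symm_apply]⟩

theorem trans : AlgebraicallySimilar T S → AlgebraicallySimilar S A → AlgebraicallySimilar T A
  | ⟨G, hG⟩, ⟨H, hH⟩ => ⟨G ≪≫ₗ H, fun x => by
      rw [LinearEquiv.trans_apply, hG, hH, LinearEquiv.trans_apply]⟩

theorem prodMap : AlgebraicallySimilar T S → AlgebraicallySimilar A B →
    AlgebraicallySimilar (LinearMap.prodMap T A) (LinearMap.prodMap S B)
  | ⟨G, hG⟩, ⟨H, hH⟩ => ⟨G.prodCongr H, fun x => Prod.ext (hG x.1) (hH x.2)⟩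

theorem of_aevalEquiv (e : Module.AEval' T ≃ₗ[K[X]] Module.AEval' S) : AlgebraicallySimilar T S :=
  ⟨Module.AEval'.of T ≪≫ₗ e.restrictScalars K ≪≫ₗ (Module.AEval'.of S).symm, fun x => by
    simp only [LinearEquiv.trans_apply, LinearEquiv.restrictScalars_apply]
    rw [← Module.AEval'.X_smul_of, map_smul, Module.AEval'.of_symm_X_smul]⟩

end AlgebraicallySimilar

/-- The `K[X]`-linear map between the modules attached to two operators that is given by a linear
map intertwining them. -/
noncomputable def aevalMap (f : X →ₗ[K] Y) (hf : ∀ x, f (T x) = S (f x)) :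
    Module.AEval' T →ₗ[K[X]] Module.AEval' S :=
  LinearMap.ofAEval T ((Module.AEval'.of S).toLinearMap ∘ₗ f) fun x =>
    (congrArg (Module.AEval'.of S) (hf x)).trans (Module.AEval'.X_smul_of S (f x)).symm

theorem aevalMap_injective {f : X →ₗ[K] Y} (hf : ∀ x, f (T x) = S (f x))
    (hinj : Function.Injective f) : Function.Injective (aevalMap f hf) :=
  (Module.AEval'.of S).injective.comp (hinj.comp (Module.AEval'.of T).symm.injective)

end Similarity

section EmptySpectrum

variable {K : Type u} [Field K] [IsAlgClosed K]

theorem isUnit_aeval_of_spectrum_eq_empty {A : Type*} [Ring A] [Algebra K A] {a : A}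
    (ha : spectrum K a = ∅) {p : K[X]} (hp : p ≠ 0) : IsUnit (aeval a p) := by
  rw [(IsAlgClosed.splits p).eq_prod_roots, map_mul, aeval_C]
  refine ((IsUnit.mk0 _ (leadingCoeff_ne_zero.2 hp)).map _).mul ?_
  by_contra h
  obtain ⟨k, hk, -⟩ := spectrum.exists_mem_of_not_isUnit_aeval_prod h
  exact (ha ▸ hk : k ∈ (∅ : Set K))

variable {X : Type v} {Y : Type w} [AddCommGroup X] [Module K X] [AddCommGroup Y] [Module K Y]
  {T : Module.End K X} {S : Module.End K Y}

theorem aeval_smul_bijective_of_spectrum_eq_empty (hT : spectrum K T = ∅) {p : K[X]}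
    (hp : p ≠ 0) : Function.Bijective fun x : Module.AEval' T => p • x :=
  (Module.End.isUnit_iff (aeval T p)).1 (isUnit_aeval_of_spectrum_eq_empty hT hp)

theorem AlgebraicallySimilar.of_spectrum_eq_empty
    (hT : spectrum K T = ∅) (hS : spectrum K S = ∅)
    (hrank : lift.{w} (Module.rank K[X] (Module.AEval' T)) =
      lift.{v} (Module.rank K[X] (Module.AEval' S))) : AlgebraicallySimilar T S :=
  let ⟨e⟩ := nonempty_linearEquiv_of_smul_bijective
    (fun _ hp => aeval_smul_bijective_of_spectrum_eq_empty hT hp)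
    (fun _ hp => aeval_smul_bijective_of_spectrum_eq_empty hS hp) hrank
  .of_aevalEquiv e

theorem exists_commuting_retraction_of_spectrum_eq_empty {D : Submodule K X}
    (hD : ∀ x ∈ D, T x ∈ D) (hs : spectrum K (T.restrict hD) = ∅) :
    ∃ ρ : X →ₗ[K] D, (∀ x, ρ (T x) = T.restrict hD (ρ x)) ∧ ∀ d : D, ρ d = d := by
  let i : Module.AEval' (T.restrict hD) →ₗ[K[X]] Module.AEval' T := aevalMap D.subtype fun _ => rfl
  have hbaer : Module.Baer K[X] (Module.AEval' (T.restrict hD)) := baer_of_smul_surjective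
    fun p hp => (aeval_smul_bijective_of_spectrum_eq_empty hs hp).surjective
  obtain ⟨h, hh⟩ := hbaer.extension_property i
    (aevalMap_injective _ D.injective_subtype) LinearMap.id
  refine ⟨(Module.AEval'.of (T.restrict hD)).symm.toLinearMap ∘ₗ h.restrictScalars K ∘ₗ
    (Module.AEval'.of T).toLinearMap, fun x => ?_, fun d => LinearMap.congr_fun hh
      (Module.AEval'.of (T.restrict hD) d)⟩
  simp only [LinearMap.comp_apply, LinearEquiv.coe_coe, LinearMap.restrictScalars_apply]
  rw [← Module.AEval'.X_smul_of, map_smul, Module.AEval'.of_symm_X_smul]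

theorem AlgebraicallySimilar.prodMap_of_ker_eq {D : Submodule K X} (hD : ∀ x ∈ D, T x ∈ D)
    (hs : spectrum K (T.restrict hD) = ∅) {c : X →ₗ[K] Y} (hc : ∀ x, c (T x) = S (c x))
    (hker : LinearMap.ker c = D) (hsurj : Function.Surjective c) :
    AlgebraicallySimilar T (LinearMap.prodMap (T.restrict hD) S) := by
  obtain ⟨ρ, hρT, hρ⟩ := exists_commuting_retraction_of_spectrum_eq_empty hD hs
  have hρ_range : LinearMap.range ρ = ⊤ := LinearMap.range_eq_top.2 fun d => ⟨d, hρ d⟩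
  have hcompl : IsCompl (LinearMap.ker ρ) (LinearMap.ker c) :=
    hker ▸ (LinearMap.isCompl_of_proj hρ).symm
  exact ⟨ρ.equivProdOfSurjectiveOfIsCompl c hρ_range (LinearMap.range_eq_top.2 hsurj) hcompl,
    fun x => Prod.ext (hρT x) (hc x)⟩

end EmptySpectrum

section HyperRange

variable {K X : Type*} [Field K] [AddCommGroup X] [Module K X] {T S : Module.End K X}

/-- The hyperrange of an operator: the intersection of the ranges of its powers. -/
def hyperRange (T : Module.End K X) : Submodule K X :=
  ⨅ n : ℕ, LinearMap.range (T ^ n)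

theorem mem_hyperRange {x : X} : x ∈ hyperRange T ↔ ∀ n : ℕ, ∃ y, (T ^ n) y = x := by
  simp [hyperRange]

theorem apply_mem_hyperRange_of_commute (h : Commute T S) :
    ∀ x ∈ hyperRange T, S x ∈ hyperRange T := by
  simp only [mem_hyperRange]
  intro x hx n
  obtain ⟨y, rfl⟩ := hx n
  exact ⟨S y, LinearMap.congr_fun (h.pow_left n) y⟩

theorem apply_mem_hyperRange : ∀ x ∈ hyperRange T, T x ∈ hyperRange T :=
  apply_mem_hyperRange_of_commute (Commute.refl T)

theorem mem_hyperRange_of_apply_mem (hT : Function.Injective T) {x : X}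
    (hx : T x ∈ hyperRange T) : x ∈ hyperRange T :=
  mem_hyperRange.2 fun n =>
    let ⟨y, hy⟩ := mem_hyperRange.1 hx (n + 1)
    ⟨y, hT <| by rw [← hy, pow_succ', Module.End.mul_apply]⟩

/-- The restriction of an operator to its hyperrange. -/
def hyperRestrict (T : Module.End K X) : Module.End K (hyperRange T) :=
  T.restrict apply_mem_hyperRange

theorem hyperRestrict_bijective (hT : Function.Injective T) :
    Function.Bijective (hyperRestrict T) := by
  refine ⟨fun a b hab => Subtype.ext (hT (congrArg Subtype.val hab)), fun d => ?_⟩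
  obtain ⟨y, hy⟩ := mem_hyperRange.1 d.2 1
  rw [pow_one] at hy
  exact ⟨⟨y, mem_hyperRange_of_apply_mem hT (hy ▸ d.2)⟩, Subtype.ext hy⟩

theorem bijective_restrict_hyperRange_of_commute (h : Commute T S)
    (hS : Function.Bijective S) :
    Function.Bijective (S.restrict (apply_mem_hyperRange_of_commute h)) := by
  refine ⟨fun a b hab => Subtype.ext (hS.injective (congrArg Subtype.val hab)), fun d => ?_⟩
  obtain ⟨x, hx⟩ := hS.surjective d
  refine ⟨⟨x, mem_hyperRange.2 fun n => ?_⟩, Subtype.ext hx⟩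
  obtain ⟨y, hy⟩ := mem_hyperRange.1 d.2 n
  obtain ⟨z, rfl⟩ := hS.surjective y
  refine ⟨z, hS.injective ?_⟩
  rw [hx, ← hy]
  exact (LinearMap.congr_fun (h.pow_left n) z).symm

theorem spectrum_hyperRestrict_eq_empty (hT : Function.Injective T)
    (hs : spectrum K T ⊆ {0}) :
    spectrum K (hyperRestrict T) = ∅ := by
  refine Set.eq_empty_of_forall_notMem fun z => ?_
  rw [spectrum.notMem_iff]
  rcases eq_or_ne z 0 with rfl | hz
  · rw [map_zero, zero_sub]
    exact ((Module.End.isUnit_iff _).2 (hyperRestrict_bijective hT)).neg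
  · have hunit : IsUnit (algebraMap K (Module.End K X) z - T) :=
      spectrum.notMem_iff.1 fun h => hz (hs h)
    have hcomm : Commute T (algebraMap K (Module.End K X) z - T) :=
      (Algebra.commute_algebraMap_right z T).sub_right (Commute.refl T)
    exact (Module.End.isUnit_iff _).2 <|
      bijective_restrict_hyperRange_of_commute hcomm ((Module.End.isUnit_iff _).1 hunit)

end HyperRange

section RightShift

variable (R M : Type*) [Semiring R] [AddCommMonoid M] [Module R M]

/-- The right shift `(a₀, a₁, …) ↦ (0, a₀, a₁, …)`. -/
def rightShift : Module.End R (ℕ → M) where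
  toFun a
    | 0 => 0
    | n + 1 => a n
  map_add' a b := by funext n; cases n <;> simp
  map_smul' c a := by funext n; cases n <;> simp

variable {R M}

@[simp]
theorem rightShift_apply_zero (a : ℕ → M) : rightShift R M a 0 = 0 := rfl

@[simp]
theorem rightShift_apply_succ (a : ℕ → M) (n : ℕ) : rightShift R M a (n + 1) = a n := rfl

end RightShift

theorem AlgebraicallySimilar.rightShift_congr {K X Y : Type*} [Field K] [AddCommGroup X]
    [Module K X] [AddCommGroup Y] [Module K Y] (e : X ≃ₗ[K] Y) :
    AlgebraicallySimilar (rightShift K X) (rightShift K Y) :=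
  ⟨LinearEquiv.piCongrRight fun _ => e, fun a => funext fun n => by cases n <;> simp⟩

section Coefficients

variable {K X : Type*} [Field K] [AddCommGroup X] [Module K X] {T L : Module.End K X}

/-- The vanishing of `lim¹` of the tower `⋯ → X → X → X` all of whose bonding maps are `T`: the
map `w ↦ (w n - T (w (n + 1)))` on sequences is onto. -/
def LimOneVanishes (T : Module.End K X) : Prop :=
  ∀ u : ℕ → X, ∃ w : ℕ → X, ∀ n, w n = u n + T (w (n + 1))

/-- The coefficients modulo `range T` of the expansion `x = x₀ + T x₁ + T² x₂ + ⋯` produced by a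
left inverse `L` of `T`. -/
def expansionCoeff (T L : Module.End K X) : X →ₗ[K] ℕ → X ⧸ LinearMap.range T :=
  LinearMap.pi fun n => (LinearMap.range T).mkQ ∘ₗ L ^ n

theorem expansionCoeff_apply (x : X) (n : ℕ) :
    expansionCoeff T L x n = (LinearMap.range T).mkQ ((L ^ n) x) := rfl

theorem expansionCoeff_intertwines (hL : Function.LeftInverse L T) (x : X) :
    expansionCoeff T L (T x) = rightShift K _ (expansionCoeff T L x) := by
  funext n
  cases n with
  | zero => simp [expansionCoeff_apply]
  | succ n => simp [expansionCoeff_apply, pow_succ, hL x]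

theorem ker_expansionCoeff (hL : Function.LeftInverse L T) :
    LinearMap.ker (expansionCoeff T L) = hyperRange T := by
  ext x
  rw [LinearMap.mem_ker, mem_hyperRange]
  constructor
  · intro h n
    have hstep : ∀ k, T ((L ^ (k + 1)) x) = (L ^ k) x := fun k => by
      obtain ⟨y, hy⟩ := (Submodule.Quotient.mk_eq_zero _).1 (congrFun h k)
      rw [pow_succ', Module.End.mul_apply, ← hy, hL y]
    refine ⟨(L ^ n) x, ?_⟩
    induction n with
    | zero => rfl
    | succ n ih => rw [pow_succ, Module.End.mul_apply, hstep, ih]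
  · intro h
    funext n
    obtain ⟨y, rfl⟩ := h (n + 1)
    have hpow : (L ^ n) ((T ^ n) (T y)) = T y := by
      simpa only [Module.End.coe_pow] using hL.iterate n (T y)
    rw [expansionCoeff_apply, pow_succ, Module.End.mul_apply, hpow]
    simp

theorem expansionCoeff_surjective (hL : Function.LeftInverse L T) (hT : LimOneVanishes T) :
    Function.Surjective (expansionCoeff T L) := by
  intro e
  choose v hv using fun n => (LinearMap.range T).mkQ_surjective (e n)
  obtain ⟨w, hw⟩ := hT fun n => v n - T (L (v n))
  have hLw : ∀ n, L (w n) = w (n + 1) := fun n => by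
    rw [hw n, map_add, map_sub, hL, hL, sub_self, zero_add]
  have hpow : ∀ n, (L ^ n) (w 0) = w n := fun n => by
    induction n with
    | zero => rfl
    | succ n ih => rw [pow_succ', Module.End.mul_apply, ih, hLw]
  refine ⟨w 0, funext fun n => ?_⟩
  have hQ : ∀ x, (LinearMap.range T).mkQ (T x) = 0 := LinearMap.congr_fun T.range_mkQ_comp
  rw [expansionCoeff_apply, hpow, hw, map_add, map_sub, hv, hQ, hQ, sub_zero, add_zero]

end Coefficients

section Classification

variable {K : Type u} [Field K] [IsAlgClosed K] {X : Type v} {Y : Type w}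
  [AddCommGroup X] [Module K X] [AddCommGroup Y] [Module K Y]
  {T : Module.End K X} {S : Module.End K Y}

theorem AlgebraicallySimilar.hyperRestrict_prodMap_rightShift
    (hinj : Function.Injective T) (hs : spectrum K T ⊆ {0}) (hT : LimOneVanishes T) :
    AlgebraicallySimilar T (LinearMap.prodMap (hyperRestrict T)
      (rightShift K (X ⧸ LinearMap.range T))) := by
  obtain ⟨L, hL⟩ := T.exists_leftInverse_of_injective (LinearMap.ker_eq_bot.2 hinj)
  replace hL : Function.LeftInverse L T := LinearMap.congr_fun hL
  exact .prodMap_of_ker_eq apply_mem_hyperRange (spectrum_hyperRestrict_eq_empty hinj hs)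
    (expansionCoeff_intertwines hL) (ker_expansionCoeff hL) (expansionCoeff_surjective hL hT)

theorem AlgebraicallySimilar.of_limOneVanishes
    (hT : Function.Injective T) (hTs : spectrum K T ⊆ {0}) (hTl : LimOneVanishes T)
    (hS : Function.Injective S) (hSs : spectrum K S ⊆ {0}) (hSl : LimOneVanishes S)
    (hhyper : lift.{w} (Module.rank K[X] (Module.AEval' (hyperRestrict T))) =
      lift.{v} (Module.rank K[X] (Module.AEval' (hyperRestrict S))))
    (hcoker : lift.{w} (Module.rank K (X ⧸ LinearMap.range T)) =
      lift.{v} (Module.rank K (Y ⧸ LinearMap.range S))) :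
    AlgebraicallySimilar T S := by
  obtain ⟨e⟩ := nonempty_linearEquiv_of_lift_rank_eq hcoker
  have hcore := of_spectrum_eq_empty (spectrum_hyperRestrict_eq_empty hT hTs)
    (spectrum_hyperRestrict_eq_empty hS hSs) hhyper
  exact (hyperRestrict_prodMap_rightShift hT hTs hTl).trans <|
    (hcore.prodMap (rightShift_congr e)).trans
      (hyperRestrict_prodMap_rightShift hS hSs hSl).symm

end Classification

-- The branches through the binary tree form an almost disjoint family of sets of nodes.
theorem exists_infinite_pairwise_finite_inter :
    ∃ S : (ℕ → Bool) → Set ℕ, (∀ a, (S a).Infinite) ∧ ∀ a b, a ≠ b → (S a ∩ S b).Finite := by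
  let node : (ℕ → Bool) → ℕ → ℕ := fun a k => Encodable.encode ((List.range k).map a)
  have hnode : ∀ {a b : ℕ → Bool} {k m : ℕ}, node a k = node b m → k = m ∧ ∀ i < k, a i = b i := by
    intro a b k m h
    have hlist := Encodable.encode_injective h
    obtain rfl : k = m := by simpa using congrArg List.length hlist
    exact ⟨rfl, fun i hi => List.map_inj_left.1 hlist i (List.mem_range.2 hi)⟩
  refine ⟨fun a => Set.range (node a),
    fun a => Set.infinite_range_of_injective fun k m h => (hnode h).1, fun a b hab => ?_⟩
  obtain ⟨i, hi⟩ := Function.ne_iff.1 hab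
  refine ((Set.finite_Iic i).image (node a)).subset ?_
  rintro _ ⟨⟨k, rfl⟩, m, hm⟩
  exact ⟨k, not_lt.1 fun hk => hi ((hnode hm.symm).2 i hk), rfl⟩

section BoundedSequences

variable (𝕜 : Type u) [NormedField 𝕜]

/-- The space `c₀` of null sequences, inside the space `ℕ →ᵇ 𝕜` of bounded sequences. -/
def nullSeq : Submodule 𝕜 (ℕ →ᵇ 𝕜) where
  carrier := {a | Tendsto a atTop (𝓝 0)}
  zero_mem' := tendsto_const_nhds
  add_mem' ha hb := by simpa only [add_zero] using! Tendsto.add ha hb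
  smul_mem' c _ ha := by simpa using Tendsto.const_smul ha c

variable {𝕜}

theorem mem_nullSeq {a : ℕ →ᵇ 𝕜} : a ∈ nullSeq 𝕜 ↔ Tendsto a atTop (𝓝 0) := Iff.rfl

theorem linearIndependent_mkQ_nullSeq_iff {ι : Type*} {v : ι → ℕ →ᵇ 𝕜} :
    (LinearIndependent 𝕜 fun i => (nullSeq 𝕜).mkQ (v i)) ↔
      ∀ (s : Finset ι) (g : ι → 𝕜),
        Tendsto (fun n => ∑ i ∈ s, g i * v i n) atTop (𝓝 0) → ∀ i ∈ s, g i = 0 := by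
  rw [linearIndependent_iff']
  refine forall₂_congr fun s g => imp_congr_left ?_
  have hsum : ∑ i ∈ s, g i • (nullSeq 𝕜).mkQ (v i) = (nullSeq 𝕜).mkQ (∑ i ∈ s, g i • v i) := by
    simp
  have hcoe : ⇑(∑ i ∈ s, g i • v i) = fun n => ∑ i ∈ s, g i * v i n := by
    ext n
    simp
  rw [hsum, Submodule.mkQ_apply, Submodule.Quotient.mk_eq_zero, mem_nullSeq, hcoe]

/-- The indicator of a set of natural numbers, as a bounded sequence. -/
noncomputable def indicatorSeq (S : Set ℕ) : ℕ →ᵇ 𝕜 :=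
  .ofNormedAddCommGroupDiscrete (S.indicator 1) 1 fun n => by
    simpa using norm_indicator_le_norm_self (1 : ℕ → 𝕜) n

theorem indicatorSeq_apply_of_mem {S : Set ℕ} {n : ℕ} (h : n ∈ S) : indicatorSeq S n = (1 : 𝕜) :=
  Set.indicator_of_mem h 1

theorem indicatorSeq_apply_of_notMem {S : Set ℕ} {n : ℕ} (h : n ∉ S) : indicatorSeq S n = (0 : 𝕜) :=
  Set.indicator_of_notMem h 1

theorem linearIndependent_indicatorSeq {ι : Type*} {S : ι → Set ℕ} (hS : ∀ i, (S i).Infinite)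
    (hSS : ∀ i j, i ≠ j → (S i ∩ S j).Finite) :
    LinearIndependent 𝕜 fun i => (nullSeq 𝕜).mkQ (indicatorSeq (S i)) := by
  refine linearIndependent_mkQ_nullSeq_iff.2 fun s g hg i hi => ?_
  have hfin : (⋃ j ∈ (s \ {i} : Set ι), S i ∩ S j).Finite :=
    (s.finite_toSet.subset Set.sdiff_subset).biUnion fun j hj => hSS i j (Ne.symm hj.2)
  refine tendsto_nhds_unique_of_frequently_eq tendsto_const_nhds hg <|
    Nat.frequently_atTop_iff_infinite.2 <| ((hS i).sdiff hfin).mono fun n hn => ?_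
  simp only [Set.mem_sdiff, Set.mem_iUnion, not_exists] at hn
  rw [Set.mem_ofPred_eq, Finset.sum_eq_single_of_mem i hi, indicatorSeq_apply_of_mem hn.1, mul_one]
  intro j hj hji
  rw [indicatorSeq_apply_of_notMem fun h => hn.2 j ⟨hj, hji⟩ ⟨hn.1, h⟩, mul_zero]

variable (𝕜) in
theorem continuum_le_rank_boundedSeq_quotient :
    𝔠 ≤ Module.rank 𝕜 ((ℕ →ᵇ 𝕜) ⧸ nullSeq 𝕜) := by
  obtain ⟨S, hS, hSS⟩ := exists_infinite_pairwise_finite_inter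
  simpa using (linearIndependent_indicatorSeq (𝕜 := 𝕜) hS hSS).cardinal_lift_le_rank

variable (𝕜) in
/-- The right shift `(a₀, a₁, …) ↦ (0, a₀, a₁, …)` on bounded sequences. -/
noncomputable def boundedShift : Module.End 𝕜 (ℕ →ᵇ 𝕜) where
  toFun a := .ofNormedAddCommGroupDiscrete (rightShift 𝕜 𝕜 a) ‖a‖ fun
    | 0 => by simp
    | n + 1 => a.norm_coe_le_norm n
  map_add' a b := by ext n; exact congrFun (map_add (rightShift 𝕜 𝕜) ⇑a ⇑b) n
  map_smul' c a := by ext n; exact congrFun (map_smul (rightShift 𝕜 𝕜) c ⇑a) n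

theorem boundedShift_pow_apply_add (a : ℕ →ᵇ 𝕜) (k m : ℕ) :
    (boundedShift 𝕜 ^ m) a (k + m) = a k := by
  induction m with
  | zero => rfl
  | succ m ih => rw [pow_succ', Module.End.mul_apply, ← ih]; rfl

/-- The sequence with entry `a n` at position `2 ^ n` and zeros elsewhere. The growing gaps keep any
two distinct shifts of it apart far out, which makes it test linear independence over `𝕜[X]`. -/
noncomputable def lacunary (a : ℕ →ᵇ 𝕜) : ℕ →ᵇ 𝕜 :=
  a.extend ⟨fun n => 2 ^ n, Nat.pow_right_injective le_rfl⟩ 0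

theorem lacunary_two_pow (a : ℕ →ᵇ 𝕜) (n : ℕ) : lacunary a (2 ^ n) = a n :=
  a.extend_apply ⟨fun n => 2 ^ n, Nat.pow_right_injective le_rfl⟩ 0 n

theorem lacunary_eq_zero (a : ℕ →ᵇ 𝕜) {k : ℕ} (hk : ∀ n, 2 ^ n ≠ k) : lacunary a k = 0 :=
  BoundedContinuousFunction.extend_apply' (by simpa using hk) a 0

theorem eventually_boundedShift_pow_lacunary (a : ℕ →ᵇ 𝕜) (i m : ℕ) :
    ∀ᶠ n in atTop, (boundedShift 𝕜 ^ m) (lacunary a) (2 ^ n + i) = if m = i then a n else 0 := by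
  split_ifs with h
  · subst h
    exact Eventually.of_forall fun n => by rw [boundedShift_pow_apply_add, lacunary_two_pow]
  · filter_upwards [eventually_gt_atTop (m + i)] with n hn
    obtain ⟨n, rfl⟩ : ∃ l, n = l + 1 := Nat.exists_eq_add_one.2 (by omega)
    have hn_lt : n < 2 ^ n := Nat.lt_two_pow_self
    have : 2 ^ (n + 1) = 2 ^ n + 2 ^ n := by rw [pow_succ, mul_two]
    obtain ⟨k, hk⟩ : ∃ k, 2 ^ (n + 1) + i = k + m := ⟨2 ^ (n + 1) + i - m, by omega⟩
    rw [hk, boundedShift_pow_apply_add, lacunary_eq_zero]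
    intro j hj
    rcases lt_trichotomy j (n + 1) with hjn | rfl | hjn
    · have := Nat.pow_le_pow_right two_pos (Nat.lt_succ_iff.1 hjn)
      omega
    · omega
    · have := Nat.pow_le_pow_right two_pos hjn
      omega

theorem eventually_aeval_boundedShift_lacunary (a : ℕ →ᵇ 𝕜) (p : 𝕜[X]) (i : ℕ) :
    ∀ᶠ n in atTop, aeval (boundedShift 𝕜) p (lacunary a) (2 ^ n + i) = p.coeff i * a n := by
  induction p using Polynomial.induction_on' with
  | add p q hp hq =>
    filter_upwards [hp, hq] with n hpn hqn
    rw [_root_.map_add (aeval _), coeff_add, add_mul, ← hpn, ← hqn]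
    rfl
  | monomial m c =>
    filter_upwards [eventually_boundedShift_pow_lacunary a i m] with n hn
    simp [aeval_monomial, coeff_monomial, hn]

theorem linearIndependent_lacunary {ι : Type*} {v : ι → ℕ →ᵇ 𝕜}
    (hv : LinearIndependent 𝕜 fun i => (nullSeq 𝕜).mkQ (v i)) :
    LinearIndependent 𝕜[X] fun i => Module.AEval'.of (boundedShift 𝕜) (lacunary (v i)) := by
  refine linearIndependent_iff'.2 fun s p hp i hi => Polynomial.ext fun k => ?_
  refine linearIndependent_mkQ_nullSeq_iff.1 hv s (fun i => (p i).coeff k) ?_ i hi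
  have hsum : ∑ j ∈ s, aeval (boundedShift 𝕜) (p j) (lacunary (v j)) = 0 := by
    simpa using congrArg (Module.AEval'.of (boundedShift 𝕜)).symm hp
  refine tendsto_const_nhds.congr' ?_
  filter_upwards [(Finset.eventually_all s).2 fun j _ =>
    eventually_aeval_boundedShift_lacunary (v j) (p j) k] with n hn
  calc (0 : 𝕜) = (∑ j ∈ s, aeval (boundedShift 𝕜) (p j) (lacunary (v j))) (2 ^ n + k) := by
        rw [hsum]; rfl
    _ = ∑ j ∈ s, (p j).coeff k * v j n := by
        rw [BoundedContinuousFunction.sum_apply]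
        exact Finset.sum_congr rfl hn

variable (𝕜) in
theorem continuum_le_rank_aeval_boundedShift :
    𝔠 ≤ Module.rank 𝕜[X] (Module.AEval' (boundedShift 𝕜)) := by
  obtain ⟨S, hS, hSS⟩ := exists_infinite_pairwise_finite_inter
  simpa using (linearIndependent_lacunary
    (linearIndependent_indicatorSeq (𝕜 := 𝕜) hS hSS)).cardinal_lift_le_rank

end BoundedSequences

section QuasinilpotentElements

theorem spectrum_subset_zero_of_tendsto {𝕜 A : Type*} [NormedField 𝕜] [NormedRing A]
    [NormedAlgebra 𝕜 A] [CompleteSpace A] {a : A}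
    (ha : ∀ C : ℝ, 0 ≤ C → Tendsto (fun n : ℕ => C ^ n * ‖a ^ n‖) atTop (𝓝 0)) :
    spectrum 𝕜 a ⊆ {0} := by
  refine fun z hz => by_contra fun hz0 => ?_
  have hbound : ∀ n : ℕ, 1 ≤ ‖z‖⁻¹ ^ n * ‖a ^ n‖ * ‖(1 : A)‖ := fun n => by
    have h := spectrum.norm_le_norm_mul_of_mem (spectrum.pow_mem_pow a n hz)
    rwa [norm_pow, ← one_le_inv_mul₀ (pow_pos (norm_pos_iff.2 hz0) n), ← mul_assoc, ← inv_pow] at h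
  have hlim := (ha ‖z‖⁻¹ (by positivity)).mul_const ‖(1 : A)‖
  rw [zero_mul] at hlim
  exact zero_lt_one.not_ge (ge_of_tendsto' hlim hbound)

theorem spectrum_subset_zero_of_norm_pow_le_one_div_factorial {𝕜 A : Type*} [NormedField 𝕜]
    [NormedRing A] [NormedAlgebra 𝕜 A] [CompleteSpace A] {a : A}
    (ha : ∀ n : ℕ, ‖a ^ n‖ ≤ 1 / n.factorial) :
    spectrum 𝕜 a ⊆ {0} :=
  spectrum_subset_zero_of_tendsto fun C hC => by
    refine squeeze_zero (fun n => by positivity) (fun n => ?_)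
      (FloorSemiring.tendsto_pow_div_factorial_atTop C)
    rw [← mul_one_div]
    gcongr
    exact ha n

variable {A : Type*} [NormedRing A] [NormedAlgebra ℂ A] [CompleteSpace A] {a b : A}

theorem summable_pow_mul_norm_pow_of_spectrum_subset_zero (ha : spectrum ℂ a ⊆ {0}) {C : ℝ}
    (hC : 0 ≤ C) : Summable fun n : ℕ => C ^ n * ‖a ^ n‖ := by
  have hradius : spectralRadius ℂ a = 0 := by
    simpa [spectralRadius, Set.subset_def] using ha
  have hlim := spectrum.pow_norm_pow_one_div_tendsto_nhds_spectralRadius a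
  rw [hradius] at hlim
  have hpos : 0 < (2 * (C + 1))⁻¹ := by positivity
  refine .of_norm_bounded_eventually_nat summable_geometric_two ?_
  filter_upwards [hlim.eventually_lt_const (ENNReal.ofReal_pos.2 hpos), eventually_gt_atTop 0]
    with n hn hn0
  have hroot : ‖a ^ n‖ ≤ (2 * (C + 1))⁻¹ ^ n := by
    have h := pow_le_pow_left₀ (by positivity) ((ENNReal.ofReal_lt_ofReal_iff hpos).1 hn).le n
    rwa [one_div, Real.rpow_inv_natCast_pow (norm_nonneg _) hn0.ne'] at h
  rw [Real.norm_of_nonneg (by positivity)]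
  calc C ^ n * ‖a ^ n‖ ≤ (C + 1) ^ n * (2 * (C + 1))⁻¹ ^ n := by gcongr; linarith
    _ = (1 / 2) ^ n := by rw [← mul_pow]; congr 1; field_simp

theorem spectrum_mul_subset_zero_of_commute (hab : Commute a b) (ha : spectrum ℂ a ⊆ {0}) :
    spectrum ℂ (a * b) ⊆ {0} := by
  refine spectrum_subset_zero_of_tendsto fun C hC => ?_
  have hlim := (summable_pow_mul_norm_pow_of_spectrum_subset_zero ha
    (mul_nonneg hC (norm_nonneg b))).tendsto_atTop_zero
  refine squeeze_zero' (.of_forall fun n => by positivity) ?_ hlim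
  filter_upwards [eventually_gt_atTop 0] with n hn
  calc C ^ n * ‖(a * b) ^ n‖ ≤ C ^ n * (‖a ^ n‖ * ‖b‖ ^ n) := by
        rw [hab.mul_pow]
        gcongr
        exact (norm_mul_le _ _).trans (by gcongr; exact norm_pow_le' b hn)
    _ = (C * ‖b‖) ^ n * ‖a ^ n‖ := by ring

end QuasinilpotentElements

theorem isQuasinilpotentOp_iff_spectrum_subset_zero {X : Type*} [AddCommGroup X] [Module ℂ X]
    {T : Module.End ℂ X} : IsQuasinilpotentOp T ↔ spectrum ℂ T ⊆ {0} := by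
  have hunit (z : ℂ) : (Function.Bijective fun x => T x - z • x) ↔ z ∉ spectrum ℂ T := by
    rw [spectrum.notMem_iff, IsUnit.sub_iff]
    exact (Module.End.isUnit_iff (T - algebraMap ℂ (Module.End ℂ X) z)).symm
  simp only [IsQuasinilpotentOp, hunit]
  exact forall_congr' fun z => not_imp_not

section BoundedSeries

variable {𝕜 E : Type*} [NormedField 𝕜] [NormedAddCommGroup E] [NormedSpace 𝕜 E] [CompleteSpace E]
  {v : ℕ → E}

theorem summable_bounded_smul (hv : Summable fun n => ‖v n‖) (a : ℕ →ᵇ 𝕜) :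
    Summable fun n => a n • v n :=
  .of_norm_bounded (hv.mul_left ‖a‖) fun n => by
    rw [norm_smul]
    gcongr
    exact a.norm_coe_le_norm n

/-- The sum `∑ aₙ vₙ` of an absolutely convergent series weighted by a bounded sequence `a`. -/
noncomputable def boundedSum (hv : Summable fun n => ‖v n‖) : (ℕ →ᵇ 𝕜) →ₗ[𝕜] E where
  toFun a := ∑' n, a n • v n
  map_add' a b := by
    simp only [BoundedContinuousFunction.add_apply, add_smul]
    exact (summable_bounded_smul hv a).tsum_add (summable_bounded_smul hv b)
  map_smul' c a := by
    simp only [BoundedContinuousFunction.smul_apply, smul_assoc]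
    exact (summable_bounded_smul hv a).tsum_const_smul c

end BoundedSeries

section BoundedPowerSeries

variable {𝕜 A : Type*} [NormedField 𝕜] [NormedRing A] [NormedAlgebra 𝕜 A] [CompleteSpace A] {t : A}

/-- The left shift `(a₀, a₁, a₂, …) ↦ (a₁, a₂, …)` on bounded sequences. -/
def boundedTail (a : ℕ →ᵇ 𝕜) : ℕ →ᵇ 𝕜 := a.compContinuous ⟨Nat.succ, continuous_of_discreteTopology⟩

theorem boundedTail_boundedShift (a : ℕ →ᵇ 𝕜) : boundedTail (boundedShift 𝕜 a) = a := rfl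

variable (ht : Summable fun n : ℕ => ‖t ^ n‖)

theorem boundedSum_pow_eq_add_mul (a : ℕ →ᵇ 𝕜) :
    boundedSum ht a = algebraMap 𝕜 A (a 0) + t * boundedSum ht (boundedTail a) := by
  refine (summable_bounded_smul ht a).tsum_eq_zero_add.trans ?_
  rw [pow_zero, ← Algebra.algebraMap_eq_smul_one]
  congr 1
  refine Eq.trans (tsum_congr fun n => ?_)
    ((summable_bounded_smul ht (boundedTail a)).tsum_mul_left t)
  rw [pow_succ', mul_smul_comm]
  rfl

theorem boundedSum_pow_boundedShift (a : ℕ →ᵇ 𝕜) :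
    boundedSum ht (boundedShift 𝕜 a) = t * boundedSum ht a := by
  rw [boundedSum_pow_eq_add_mul, boundedTail_boundedShift, show boundedShift 𝕜 a 0 = 0 from rfl,
    map_zero, zero_add]

theorem commute_boundedSum_pow (a : ℕ →ᵇ 𝕜) : Commute t (boundedSum ht a) :=
  Commute.tsum_right t fun n => ((Commute.refl t).pow_right n).smul_right (a n)

end BoundedPowerSeries

theorem lift_rank_aeval_le_of_injective {K : Type u} {X : Type v} {Y : Type w} [Field K]
    [AddCommGroup X] [Module K X] [AddCommGroup Y] [Module K Y]
    {T : Module.End K X} {S : Module.End K Y} {f : X →ₗ[K] Y} (hf : ∀ x, f (T x) = S (f x))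
    (hinj : Function.Injective f) :
    lift.{w} (Module.rank K[X] (Module.AEval' T)) ≤
      lift.{v} (Module.rank K[X] (Module.AEval' S)) :=
  LinearMap.lift_rank_le_of_injective (aevalMap f hf) (aevalMap_injective hf hinj)

section HyperRangeRank

variable {X : Type v} [NormedAddCommGroup X] [NormedSpace ℂ X] [CompleteSpace X]
  {T : X →L[ℂ] X}

theorem boundedSum_pow_apply_eq_zero_iff (hinj : Function.Injective T) (hs : spectrum ℂ T ⊆ {0})
    (hsum : Summable fun n : ℕ => ‖T ^ n‖) {x : X} (hx : x ≠ 0) {a : ℕ →ᵇ ℂ} :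
    boundedSum hsum a x = 0 ↔ a = 0 := by
  refine ⟨fun ha => ?_, by rintro rfl; simp⟩
  have hhead : ∀ b : ℕ →ᵇ ℂ, boundedSum hsum b x = 0 → b 0 = 0 := fun b hb => by
    rw [boundedSum_pow_eq_add_mul] at hb
    by_contra hb0
    have hspec : -b 0 ∉ spectrum ℂ (T * boundedSum hsum (boundedTail b)) := fun h =>
      hb0 (neg_eq_zero.1
        (spectrum_mul_subset_zero_of_commute (commute_boundedSum_pow hsum _) hs h))
    rw [spectrum.notMem_iff, map_neg, ← neg_add', IsUnit.neg_iff,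
      ContinuousLinearMap.isUnit_iff_bijective] at hspec
    exact hx (hspec.injective (hb.trans (map_zero _).symm))
  ext n
  induction n generalizing a with
  | zero => exact hhead a ha
  | succ _ ih =>
    have hhead_a := hhead a ha
    rw [boundedSum_pow_eq_add_mul, hhead_a, map_zero, zero_add] at ha
    exact ih (a := boundedTail a) (hinj (ha.trans T.map_zero.symm))

theorem continuum_le_rank_hyperRestrict (hinj : Function.Injective T) (hs : spectrum ℂ T ⊆ {0})
    {x : X} (hx : x ∈ hyperRange (T : Module.End ℂ X)) (hx0 : x ≠ 0) :
    𝔠 ≤ Module.rank ℂ[X] (Module.AEval' (hyperRestrict (T : Module.End ℂ X))) := by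
  have hsum : Summable fun n : ℕ => ‖T ^ n‖ := by
    simpa using summable_pow_mul_norm_pow_of_spectrum_subset_zero hs zero_le_one
  let φ : (ℕ →ᵇ ℂ) →ₗ[ℂ] hyperRange (T : Module.End ℂ X) :=
    ((ContinuousLinearMap.apply ℂ X x).toLinearMap ∘ₗ boundedSum hsum).codRestrict _ fun a =>
      apply_mem_hyperRange_of_commute (congrArg ContinuousLinearMap.toLinearMap
        (commute_boundedSum_pow hsum a)) x hx
  have hφ : ∀ a, φ (boundedShift ℂ a) = hyperRestrict (T : Module.End ℂ X) (φ a) := fun a =>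
    Subtype.ext (DFunLike.congr_fun (boundedSum_pow_boundedShift hsum a) x)
  have hφ_inj : Function.Injective φ := (injective_iff_map_eq_zero φ).2 fun a ha =>
    (boundedSum_pow_apply_eq_zero_iff hinj hs hsum hx0).1 (congrArg Subtype.val ha)
  have hrank := lift_rank_aeval_le_of_injective hφ hφ_inj
  rw [lift_uzero] at hrank
  calc 𝔠 = lift.{v} 𝔠 := lift_continuum.symm
    _ ≤ lift.{v} (Module.rank ℂ[X] (Module.AEval' (boundedShift ℂ))) :=
      Cardinal.lift_le.2 (continuum_le_rank_aeval_boundedShift ℂ)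
    _ ≤ Module.rank ℂ[X] (Module.AEval' (hyperRestrict (T : Module.End ℂ X))) := hrank

end HyperRangeRank

section LimOne

variable {𝕜 X : Type*} [NontriviallyNormedField 𝕜] [NormedAddCommGroup X] [NormedSpace 𝕜 X]
  {T : X →L[𝕜] X}

theorem norm_pow_apply_le (T : X →L[𝕜] X) (n : ℕ) (x : X) :
    ‖(T ^ n) x‖ ≤ (1 + ‖T‖) ^ n * ‖x‖ := by
  induction n generalizing x with
  | zero => simp
  | succ n ih =>
    calc ‖(T ^ (n + 1)) x‖ ≤ (1 + ‖T‖) ^ n * ‖T x‖ := by rw [pow_succ]; exact ih (T x)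
      _ ≤ (1 + ‖T‖) ^ n * ((1 + ‖T‖) * ‖x‖) := by
        gcongr
        exact (T.le_opNorm x).trans (by gcongr; linarith)
      _ = (1 + ‖T‖) ^ (n + 1) * ‖x‖ := by ring

theorem exists_eq_add_apply_of_norm_le [CompleteSpace X] {y : ℕ → X} {ε : ℝ}
    (hy : ∀ n, ‖T (y n)‖ ≤ ε / 2 / 2 ^ n / (1 + ‖T‖) ^ n) :
    ∃ z : ℕ → X, (∀ n, z n = y n + T (z (n + 1))) ∧ ‖T (z 0)‖ ≤ ε := by
  have hε : 0 ≤ ε := by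
    have hhalf : 0 ≤ ε / 2 := by simpa using (norm_nonneg _).trans (hy 0)
    linarith
  have hbound : ∀ n j, ‖(T ^ (j + 1)) (y (n + j))‖ ≤ ε / 2 / 2 ^ j := fun n j => by
    calc ‖(T ^ (j + 1)) (y (n + j))‖ ≤ (1 + ‖T‖) ^ j * ‖T (y (n + j))‖ := by
          rw [pow_succ]; exact norm_pow_apply_le T j _
      _ ≤ (1 + ‖T‖) ^ j * (ε / 2 / 2 ^ (n + j) / (1 + ‖T‖) ^ (n + j)) := by gcongr; exact hy _
      _ ≤ (1 + ‖T‖) ^ j * (ε / 2 / 2 ^ j / (1 + ‖T‖) ^ j) := by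
          gcongr <;> simp
      _ = ε / 2 / 2 ^ j := by field_simp
  have hsum : ∀ n, Summable fun j => (T ^ j) (y (n + j)) := fun n => by
    rw [← summable_nat_add_iff 1]
    refine .of_norm_bounded (summable_geometric_two' ε) fun j => ?_
    simpa only [add_assoc, add_comm 1 j] using hbound (n + 1) j
  refine ⟨fun n => ∑' j, (T ^ j) (y (n + j)), fun n => ?_, ?_⟩
  · beta_reduce
    rw [(hsum n).tsum_eq_zero_add, T.map_tsum (hsum (n + 1))]
    refine congrArg (y n + ·) (tsum_congr fun j => ?_)
    rw [pow_succ', add_assoc, add_comm 1 j]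
    rfl
  · rw [T.map_tsum (hsum 0)]
    refine tsum_of_norm_bounded (hasSum_geometric_two' ε) fun j => ?_
    simpa only [pow_succ'] using! hbound 0 j

theorem exists_norm_apply_correction_le (hT : Set.range T ⊆ closure (Set.range (T ∘ T)))
    {δ : ℕ → ℝ} (hδ : ∀ n, 0 < δ n) (u : ℕ → X) :
    ∃ a : ℕ → X, a 0 = 0 ∧ ∀ n, ‖T (u n + a n - T (a (n + 1)))‖ ≤ δ n := by
  have happrox : ∀ n x, ∃ x', ‖T (x - T x')‖ ≤ δ n := fun n x => by
    obtain ⟨x', hx'⟩ := Metric.mem_closure_range_iff.1 (hT ⟨x, rfl⟩) (δ n) (hδ n)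
    exact ⟨x', by rw [map_sub, ← dist_eq_norm]; exact hx'.le⟩
  choose next hnext using happrox
  exact ⟨Nat.rec 0 fun n a => next n (u n + a), rfl, fun n => hnext n _⟩

theorem exists_eq_add_apply_norm_le [CompleteSpace X]
    (hT : Set.range T ⊆ closure (Set.range (T ∘ T))) {ε : ℝ} (hε : 0 < ε) (u : ℕ → X) :
    ∃ w : ℕ → X, (∀ n, w n = u n + T (w (n + 1))) ∧ ‖T (w 0)‖ ≤ ε := by
  obtain ⟨a, ha0, ha⟩ := exists_norm_apply_correction_le hT
    (δ := fun n => ε / 2 / 2 ^ n / (1 + ‖T‖) ^ n) (fun n => by positivity) u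
  obtain ⟨z, hz, hz0⟩ := exists_eq_add_apply_of_norm_le ha
  refine ⟨z - a, fun n => ?_, by simpa [ha0] using hz0⟩
  rw [Pi.sub_apply, hz n, Pi.sub_apply, map_sub]
  abel

theorem limOneVanishes_of_range_subset_closure [CompleteSpace X]
    (hT : Set.range T ⊆ closure (Set.range (T ∘ T))) :
    LimOneVanishes (T : Module.End 𝕜 X) := fun u =>
  let ⟨w, hw, _⟩ := exists_eq_add_apply_norm_le hT one_pos u
  ⟨w, hw⟩

theorem exists_mem_hyperRange_ne_zero [CompleteSpace X] [Nontrivial X]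
    (hT : Set.range T ⊆ closure (Set.range (T ∘ T)))
    (hinj : Function.Injective T) : ∃ x ∈ hyperRange (T : Module.End 𝕜 X), x ≠ 0 := by
  obtain ⟨v, hv⟩ := exists_ne (0 : X)
  have hTv : 0 < ‖T v‖ := norm_pos_iff.2 fun h => hv (hinj (h.trans T.map_zero.symm))
  obtain ⟨w, hw, hw0⟩ := exists_eq_add_apply_norm_le hT (half_pos hTv) (Pi.single 0 v)
  have hwT : ∀ n, ((T : Module.End 𝕜 X) ^ n) (w (n + 1)) = w 1 := fun n => by
    induction n with
    | zero => rfl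
    | succ n ih =>
      rw [pow_succ, Module.End.mul_apply, ← ih]
      refine congrArg _ ?_
      simpa using (hw (n + 1)).symm
  refine ⟨w 1, mem_hyperRange.2 fun n => ⟨_, hwT n⟩, fun h => ?_⟩
  rw [hw 0, h, map_zero, add_zero, Pi.single_eq_same] at hw0
  linarith

end LimOne

section KFunctional

variable {𝕜 X Y : Type*} [NontriviallyNormedField 𝕜] [NormedAddCommGroup X] [NormedSpace 𝕜 X]
  [NormedAddCommGroup Y] [NormedSpace 𝕜 Y] {T : X →L[𝕜] Y}

/-- Peetre's `K`-functional `u ↦ inf_x (‖x‖ + k ‖T (u - x)‖)` of the norm of `X` and the norm that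
`T` pulls back from `Y`. -/
noncomputable def kFunctional (T : X →L[𝕜] Y) (k : ℝ≥0) : Seminorm 𝕜 X :=
  normSeminorm 𝕜 X ⊓ k • (normSeminorm 𝕜 Y).comp T.toLinearMap

theorem kFunctional_le_norm (k : ℝ≥0) (u : X) : kFunctional T k u ≤ ‖u‖ :=
  (inf_le_left : kFunctional T k ≤ normSeminorm 𝕜 X) u

theorem kFunctional_le_mul_norm_apply (k : ℝ≥0) (u : X) : kFunctional T k u ≤ k * ‖T u‖ :=
  (inf_le_right : kFunctional T k ≤ k • (normSeminorm 𝕜 Y).comp T.toLinearMap) u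

theorem exists_norm_add_lt_of_kFunctional_lt {k : ℝ≥0} {u : X} {r : ℝ}
    (h : kFunctional T k u < r) : ∃ x, ‖x‖ + k * ‖T (u - x)‖ < r := by
  rw [kFunctional, Seminorm.inf_apply] at h
  exact exists_lt_of_ciInf_lt h

theorem norm_le_of_exists_norm_apply_sub_le [CompleteSpace X] (hinj : Function.Injective T) {C : ℝ}
    (hC : 0 ≤ C) (h : ∀ u, ∃ x, ‖x‖ ≤ C * ‖T u‖ ∧ ‖T (u - x)‖ ≤ ‖T u‖ / 2) (u : X) :
    ‖u‖ ≤ 2 * C * ‖T u‖ := by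
  choose x hx_norm hx_apply using h
  let r : ℕ → X := fun n => (fun v => v - x v)^[n] u
  have hr_succ : ∀ n, r (n + 1) = r n - x (r n) := fun n => Function.iterate_succ_apply' _ n u
  have hTr : ∀ n, ‖T (r n)‖ ≤ ‖T u‖ / 2 ^ n := fun n => by
    induction n with
    | zero => simp [r]
    | succ n ih =>
      rw [hr_succ, pow_succ, ← div_div]
      exact (hx_apply _).trans (by gcongr)
  have hdist : ∀ n, dist (r n) (r (n + 1)) ≤ 2 * C * ‖T u‖ / 2 / 2 ^ n := fun n => by
    calc dist (r n) (r (n + 1)) = ‖x (r n)‖ := by rw [hr_succ, dist_eq_norm, sub_sub_cancel]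
      _ ≤ C * (‖T u‖ / 2 ^ n) := (hx_norm _).trans (by gcongr; exact hTr n)
      _ = 2 * C * ‖T u‖ / 2 / 2 ^ n := by ring
  obtain ⟨l, hl⟩ := cauchySeq_tendsto_of_complete (cauchySeq_of_le_geometric_two hdist)
  have hTr_lim : Tendsto (fun n => T (r n)) atTop (𝓝 0) :=
    squeeze_zero_norm hTr <|
      tendsto_const_nhds.div_atTop (tendsto_pow_atTop_atTop_of_one_lt one_lt_two)
  obtain rfl : l = 0 := hinj <|
    (tendsto_nhds_unique ((T.continuous.tendsto l).comp hl) hTr_lim).trans T.map_zero.symm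
  simpa [r] using dist_le_of_le_geometric_two_of_tendsto₀ hdist hl

theorem exists_mul_norm_apply_lt_kFunctional [CompleteSpace X] (hinj : Function.Injective T)
    (hT : ¬ IsClosed (Set.range T)) (R : ℝ) : ∃ k u, R * ‖T u‖ < kFunctional T k u := by
  by_contra! hR
  let C : ℝ≥0 := ‖R‖₊ + 1
  have hstep : ∀ u, ∃ x, ‖x‖ ≤ C * ‖T u‖ ∧ ‖T (u - x)‖ ≤ ‖T u‖ / 2 := fun u => by
    rcases eq_or_ne (T u) 0 with hu | hu
    · exact ⟨0, by simp [hu]⟩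
    have hlt : kFunctional T (2 * C) u < C * ‖T u‖ := by
      refine (hR _ u).trans_lt ?_
      gcongr
      exact (le_abs_self R).trans_lt (lt_add_one _)
    obtain ⟨x, hx⟩ := exists_norm_add_lt_of_kFunctional_lt hlt
    have hC : (0 : ℝ) < C := by positivity
    push_cast at hx
    refine ⟨x, by nlinarith [norm_nonneg (T (u - x))], le_of_mul_le_mul_left ?_ hC⟩
    linarith [norm_nonneg x]
  exact hT <| AntilipschitzWith.isClosed_range (K := 2 * C)
    (AddMonoidHomClass.antilipschitz_of_bound T fun u => by
      exact_mod_cast norm_le_of_exists_norm_apply_sub_le hinj C.coe_nonneg hstep u)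
    T.uniformContinuous

end KFunctional

section GlidingHump

theorem exists_seq_forall_sum_range {α M : Type*} [AddCommMonoid M] (μ : α → M)
    {P : ℕ → M → α → Prop} (h : ∀ n m, ∃ a, P n m a) :
    ∃ f : ℕ → α, ∀ n, P n (∑ i ∈ Finset.range n, μ (f i)) (f n) := by
  choose next hnext using h
  let m : ℕ → M := Nat.rec 0 fun n m => m + μ (next n m)
  have hm : ∀ n, m n = ∑ i ∈ Finset.range n, μ (next i (m i)) := fun n => by
    induction n with
    | zero => rfl
    | succ n ih => rw [Finset.sum_range_succ, ← ih]
  exact ⟨fun n => next n (m n), fun n => hm n ▸ hnext n (m n)⟩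

variable {𝕜 X Y : Type*} [NontriviallyNormedField 𝕜] [NormedAddCommGroup X] [NormedSpace 𝕜 X]
  [NormedAddCommGroup Y] [NormedSpace 𝕜 Y] {T : X →L[𝕜] Y} {k : ℕ → ℝ≥0} {u : ℕ → X}

/-- A gliding hump for `T`: vectors `u n` whose images are small, and parameters `k n` for which
`u n` is large in the `K`-functional of `T`, relative to all the parameters and vectors before. -/
structure IsGlidingHump (T : X →L[𝕜] Y) (k : ℕ → ℝ≥0) (u : ℕ → X) : Prop where
  norm_apply_le (n : ℕ) :
    (1 + ∑ i ∈ Finset.range n, (k i + ‖u i‖)) * ‖T (u n)‖ ≤ (1 / 2) ^ n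
  le_kFunctional (n : ℕ) :
    (n + 1) * (1 + ∑ i ∈ Finset.range n, (k i + ‖u i‖)) ≤ kFunctional T (k n) (u n)

theorem exists_isGlidingHump (h : ∀ R, ∃ k u, R * ‖T u‖ < kFunctional T k u) :
    ∃ k u, IsGlidingHump T k u := by
  obtain ⟨d, hd⟩ := NormedField.exists_one_lt_norm 𝕜
  have hstep : ∀ (n : ℕ) (m : ℝ≥0), ∃ p : ℝ≥0 × X, (1 + m) * ‖T p.2‖ ≤ (1 / 2) ^ n ∧
      (n + 1) * (1 + m) ≤ kFunctional T p.1 p.2 := fun n m => by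
    obtain ⟨k, u, hku⟩ := h ((n + 1) * (1 + m) * ‖d‖ * (2 ^ n * (1 + m)))
    have hu : 0 < kFunctional T k u := lt_of_le_of_lt (by positivity) hku
    obtain ⟨c, -, hc_lt, hc_le, -⟩ := (kFunctional T k).rescale_to_shell hd
      (ε := (n + 1) * (1 + m) * ‖d‖) (by positivity) hu.ne'
    rw [mul_div_cancel_right₀ _ (by positivity)] at hc_le
    refine ⟨(k, c • u), ?_, hc_le⟩
    have hcu : (n + 1) * (1 + m) * ‖d‖ * (2 ^ n * ((1 + m) * ‖T (c • u)‖)) <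
        (n + 1) * (1 + m) * ‖d‖ * 1 := by
      calc _ = ‖c‖ * ((n + 1) * (1 + m) * ‖d‖ * (2 ^ n * (1 + m)) * ‖T u‖) := by
            rw [map_smul, norm_smul]; ring
        _ ≤ ‖c‖ * kFunctional T k u := by gcongr
        _ = kFunctional T k (c • u) := (map_smul_eq_mul _ c u).symm
        _ < _ := by rwa [mul_one]
    rw [one_div_pow, le_div_iff₀' (by positivity)]
    exact (lt_of_mul_lt_mul_left hcu (by positivity)).le
  obtain ⟨p, hp⟩ := exists_seq_forall_sum_range (fun p : ℝ≥0 × X => p.1 + ‖p.2‖₊) hstep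
  push_cast at hp
  exact ⟨fun n => (p n).1, fun n => (p n).2, fun n => (hp n).1, fun n => (hp n).2⟩

namespace IsGlidingHump

theorem norm_apply_le_geometric (h : IsGlidingHump T k u) (n : ℕ) : ‖T (u n)‖ ≤ (1 / 2) ^ n := by
  refine le_trans (le_mul_of_one_le_left (norm_nonneg _) ?_) (h.norm_apply_le n)
  linarith [(by positivity : 0 ≤ ∑ i ∈ Finset.range n, (k i + ‖u i‖))]

theorem summable_norm_apply (h : IsGlidingHump T k u) : Summable fun n => ‖T (u n)‖ :=
  .of_nonneg_of_le (fun _ => norm_nonneg _) h.norm_apply_le_geometric summable_geometric_two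

theorem mul_norm_apply_le (h : IsGlidingHump T k u) {n i : ℕ} (hni : n < i) :
    k n * ‖T (u i)‖ ≤ (1 / 2) ^ i := by
  refine le_trans ?_ (h.norm_apply_le i)
  gcongr
  have hsingle := Finset.single_le_sum (f := fun i => (k i + ‖u i‖ : ℝ)) (fun _ _ => by positivity)
    (Finset.mem_range.2 hni)
  linarith [norm_nonneg (u n)]

variable {c : ℕ → 𝕜} {M : ℝ} {y : X}

theorem mul_norm_apply_sub_sum_le (h : IsGlidingHump T k u) (hc : ∀ n, ‖c n‖ ≤ M)
    (hy : HasSum (fun n => c n • T (u n)) (T y)) (n : ℕ) :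
    k n * ‖T (y - ∑ i ∈ Finset.range (n + 1), c i • u i)‖ ≤ 2 * M := by
  have hM : 0 ≤ M := (norm_nonneg _).trans (hc 0)
  rcases eq_or_ne (k n) 0 with hk | hk
  · rw [hk, NNReal.coe_zero, zero_mul]
    positivity
  have hk_pos : (0 : ℝ) < k n := by positivity
  have htail : HasSum (fun i => c (i + (n + 1)) • T (u (i + (n + 1))))
      (T (y - ∑ i ∈ Finset.range (n + 1), c i • u i)) := by
    simpa using (hasSum_nat_add_iff' (n + 1)).2 hy
  have hbound : ∀ i, ‖c (i + (n + 1)) • T (u (i + (n + 1)))‖ ≤ M / k n * (1 / 2) ^ i := fun i => by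
    have hsmall : k n * ‖T (u (i + (n + 1)))‖ ≤ (1 / 2) ^ i :=
      (h.mul_norm_apply_le (by omega)).trans
        (pow_le_pow_of_le_one (by norm_num) (by norm_num) (by omega))
    rw [norm_smul, div_mul_eq_mul_div, le_div_iff₀ hk_pos, mul_assoc, mul_comm _ (k n : ℝ)]
    exact mul_le_mul (hc _) hsmall (by positivity) hM
  calc k n * ‖T (y - ∑ i ∈ Finset.range (n + 1), c i • u i)‖ ≤ k n * (M / k n * 2) := by
        gcongr
        exact htail.norm_le_of_bounded (hasSum_geometric_two.mul_left _) hbound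
    _ = 2 * M := by field_simp

theorem norm_le_div (h : IsGlidingHump T k u) (hc : ∀ n, ‖c n‖ ≤ M)
    (hy : HasSum (fun n => c n • T (u n)) (T y)) (n : ℕ) : ‖c n‖ ≤ (‖y‖ + 3 * M) / (n + 1) := by
  have hM : 0 ≤ M := (norm_nonneg _).trans (hc 0)
  set s : ℝ := ∑ i ∈ Finset.range n, (k i + ‖u i‖)
  have hs : 0 ≤ s := by positivity
  have hhead : kFunctional T (k n) (∑ i ∈ Finset.range n, c i • u i) ≤ M * s := by
    refine (kFunctional_le_norm _ _).trans ?_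
    rw [Finset.mul_sum]
    refine norm_sum_le_of_le _ fun i _ => ?_
    rw [norm_smul]
    exact mul_le_mul (hc i) (le_add_of_nonneg_left (k i).coe_nonneg) (norm_nonneg _) hM
  set t := y - ∑ i ∈ Finset.range (n + 1), c i • u i with ht
  have htail : kFunctional T (k n) t ≤ 2 * M :=
    (kFunctional_le_mul_norm_apply _ _).trans (h.mul_norm_apply_sub_sum_le hc hy n)
  have hterm : c n • u n = y - ∑ i ∈ Finset.range n, c i • u i - t := by
    rw [ht, Finset.sum_range_succ]
    abel
  have hle : ‖c n‖ * (n + 1) * (1 + s) ≤ (‖y‖ + 3 * M) * (1 + s) := by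
    calc ‖c n‖ * (n + 1) * (1 + s) ≤ ‖c n‖ * kFunctional T (k n) (u n) := by
          rw [mul_assoc]
          gcongr
          exact h.le_kFunctional n
      _ = kFunctional T (k n) (y - ∑ i ∈ Finset.range n, c i • u i - t) := by
          rw [← hterm, map_smul_eq_mul]
      _ ≤ ‖y‖ + M * s + 2 * M :=
          (map_sub_le_add _ _ _).trans <| add_le_add
            ((map_sub_le_add _ _ _).trans (add_le_add (kFunctional_le_norm _ _) hhead)) htail
      _ ≤ (‖y‖ + 3 * M) * (1 + s) := by
          nlinarith [mul_nonneg (norm_nonneg y) hs, mul_nonneg hM hs]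
  rw [le_div_iff₀ (by positivity)]
  exact le_of_mul_le_mul_right hle (by positivity)

theorem tendsto_zero (h : IsGlidingHump T k u) (hc : ∀ n, ‖c n‖ ≤ M)
    (hy : HasSum (fun n => c n • T (u n)) (T y)) : Tendsto c atTop (𝓝 0) := by
  refine squeeze_zero_norm (h.norm_le_div hc hy) ?_
  simpa [div_eq_mul_inv] using
    (tendsto_one_div_add_atTop_nhds_zero_nat (𝕜 := ℝ)).const_mul (‖y‖ + 3 * M)

end IsGlidingHump

end GlidingHump

section CokernelRank

theorem lift_rank_quotient_le_of_ker_le {K : Type u} {M : Type v} {N : Type w} [Ring K]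
    [AddCommGroup M] [Module K M] [AddCommGroup N] [Module K N] {f : M →ₗ[K] N}
    {p : Submodule K M} (h : LinearMap.ker f ≤ p) :
    lift.{w} (Module.rank K (M ⧸ p)) ≤ lift.{v} (Module.rank K N) :=
  (Cardinal.lift_le.2 (LinearMap.rank_le_of_surjective _ (Submodule.factor_surjective h))).trans <|
    LinearMap.lift_rank_le_of_injective ((LinearMap.ker f).liftQ f le_rfl)
      (LinearMap.ker_eq_bot.1 (Submodule.ker_liftQ_eq_bot' _ f rfl))

variable {𝕜 : Type u} {X : Type v} {Y : Type w} [NontriviallyNormedField 𝕜]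
  [NormedAddCommGroup X] [NormedSpace 𝕜 X] [CompleteSpace X] [NormedAddCommGroup Y]
  [NormedSpace 𝕜 Y] [CompleteSpace Y] {T : X →L[𝕜] Y}

theorem continuum_le_rank_quotient_range (hinj : Function.Injective T)
    (hT : ¬ IsClosed (Set.range T)) :
    𝔠 ≤ Module.rank 𝕜 (Y ⧸ LinearMap.range (T : X →ₗ[𝕜] Y)) := by
  obtain ⟨k, u, h⟩ := exists_isGlidingHump (exists_mul_norm_apply_lt_kFunctional hinj hT)
  let f : (ℕ →ᵇ 𝕜) →ₗ[𝕜] Y ⧸ LinearMap.range (T : X →ₗ[𝕜] Y) :=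
    (LinearMap.range (T : X →ₗ[𝕜] Y)).mkQ ∘ₗ boundedSum h.summable_norm_apply
  have hker : LinearMap.ker f ≤ nullSeq 𝕜 := fun a ha => by
    obtain ⟨y, hy⟩ := (Submodule.Quotient.mk_eq_zero _).1 ha
    exact h.tendsto_zero a.norm_coe_le_norm <|
      (summable_bounded_smul h.summable_norm_apply a).hasSum_iff.2 hy.symm
  have hrank := lift_rank_quotient_le_of_ker_le hker
  have hnull := Cardinal.lift_le.{w}.2 (continuum_le_rank_boundedSeq_quotient 𝕜)
  rw [lift_continuum] at hnull
  exact Cardinal.lift_le.1 (lift_continuum.le.trans (hnull.trans hrank))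

end CokernelRank

section QuasinilpotentOperators

variable {X : Type v} {Y : Type w} [NormedAddCommGroup X] [NormedSpace ℂ X] [CompleteSpace X]
  [Nontrivial X] [NormedAddCommGroup Y] [NormedSpace ℂ Y] [CompleteSpace Y] [Nontrivial Y]
  {T : X →L[ℂ] X} {S : Y →L[ℂ] Y}

theorem not_isClosed_range_of_spectrum_subset_zero (hinj : Function.Injective T)
    (hs : spectrum ℂ T ⊆ {0}) (hT : Set.range T ⊆ closure (Set.range (T ∘ T))) :
    ¬ IsClosed (Set.range T) := fun hclosed => by
  obtain ⟨_, hanti⟩ := T.antilipschitz_of_injective_of_isClosed_range hinj hclosed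
  have hclosed_sq : IsClosed (Set.range (T ∘ T)) := Set.range_comp T T ▸
    (hanti.isClosedEmbedding T.uniformContinuous).isClosedMap _ hclosed
  have hsurj : Function.Surjective T := fun x =>
    let ⟨y, hy⟩ := hclosed_sq.closure_subset (hT ⟨x, rfl⟩)
    ⟨y, hinj hy⟩
  obtain ⟨z, hz⟩ := spectrum.nonempty T
  obtain rfl := hs hz
  exact (spectrum.zero_mem_iff ℂ).1 hz (ContinuousLinearMap.isUnit_iff_bijective.2 ⟨hinj, hsurj⟩)

theorem rank_hyperRestrict_eq_continuum (hX : #X ≤ 𝔠) (hinj : Function.Injective T)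
    (hs : spectrum ℂ T ⊆ {0}) (hT : Set.range T ⊆ closure (Set.range (T ∘ T))) :
    Module.rank ℂ[X] (Module.AEval' (hyperRestrict (T : Module.End ℂ X))) = 𝔠 := by
  obtain ⟨x, hx, hx0⟩ := exists_mem_hyperRange_ne_zero hT hinj
  refine le_antisymm ?_ (continuum_le_rank_hyperRestrict hinj hs hx hx0)
  exact (rank_le_card _ _).trans ((mk_subtype_le _).trans hX)

theorem rank_quotient_range_eq_continuum (hX : #X ≤ 𝔠) (hinj : Function.Injective T)
    (hs : spectrum ℂ T ⊆ {0}) (hT : Set.range T ⊆ closure (Set.range (T ∘ T))) :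
    Module.rank ℂ (X ⧸ LinearMap.range (T : Module.End ℂ X)) = 𝔠 := by
  refine le_antisymm ?_ <| continuum_le_rank_quotient_range hinj
    (not_isClosed_range_of_spectrum_subset_zero hinj hs hT)
  exact (rank_le_card _ _).trans ((mk_le_of_surjective (Submodule.mkQ_surjective _)).trans hX)

theorem AlgebraicallySimilar.of_range_subset_closure
    (hX : #X ≤ 𝔠) (hT : Function.Injective T) (hTs : spectrum ℂ T ⊆ {0})
    (hTr : Set.range T ⊆ closure (Set.range (T ∘ T)))
    (hY : #Y ≤ 𝔠) (hS : Function.Injective S) (hSs : spectrum ℂ S ⊆ {0})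
    (hSr : Set.range S ⊆ closure (Set.range (S ∘ S))) :
    AlgebraicallySimilar (T : Module.End ℂ X) (S : Module.End ℂ Y) := by
  refine .of_limOneVanishes hT (ContinuousLinearMap.spectrum_eq.symm.trans_subset hTs)
    (limOneVanishes_of_range_subset_closure hTr) hS
    (ContinuousLinearMap.spectrum_eq.symm.trans_subset hSs)
    (limOneVanishes_of_range_subset_closure hSr) ?_ ?_
  · rw [rank_hyperRestrict_eq_continuum hX hT hTs hTr,
      rank_hyperRestrict_eq_continuum hY hS hSs hSr, lift_continuum, lift_continuum]
  · rw [rank_quotient_range_eq_continuum hX hT hTs hTr,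
      rank_quotient_range_eq_continuum hY hS hSs hSr, lift_continuum, lift_continuum]

end QuasinilpotentOperators

section Volterra

theorem volterra_apply (f : C(Icc (0 : ℝ) 1, ℂ)) (x : Icc (0 : ℝ) 1) :
    volterra f x = ∫ t in (0 : ℝ)..x, f (projIcc 0 1 zero_le_one t) := rfl

theorem hasDerivWithinAt_IccExtend_volterra (f : C(Icc (0 : ℝ) 1, ℂ)) (x : Icc (0 : ℝ) 1) :
    HasDerivWithinAt (IccExtend zero_le_one (volterra f)) (f x) (Icc 0 1) x := by
  have hderiv := ((f.continuous.Icc_extend' (h := zero_le_one)).integral_hasStrictDerivAt 0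
    (x : ℝ)).hasDerivAt
  rw [IccExtend_val] at hderiv
  exact hderiv.hasDerivWithinAt.congr_of_mem (fun y hy => IccExtend_of_mem _ _ hy) x.2

theorem volterra_injective : Function.Injective volterra := fun f g hfg => by
  ext x
  exact (uniqueDiffOn_Icc zero_lt_one x x.2).eq_deriv _ (hasDerivWithinAt_IccExtend_volterra f x)
    (hfg ▸ hasDerivWithinAt_IccExtend_volterra g x)

theorem norm_volterra_pow_apply_le (n : ℕ) (f : C(Icc (0 : ℝ) 1, ℂ)) (x : Icc (0 : ℝ) 1) :
    ‖(volterra ^ n) f x‖ ≤ ‖f‖ * ((x : ℝ) ^ n / n.factorial) := by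
  induction n generalizing x with
  | zero => simpa using f.norm_coe_le_norm x
  | succ n ih =>
    rw [pow_succ', Module.End.mul_apply, volterra_apply]
    have hint : ∫ t in (0 : ℝ)..x, ‖f‖ * (t ^ n / n.factorial) =
        ‖f‖ * ((x : ℝ) ^ (n + 1) / (n + 1).factorial) := by
      rw [intervalIntegral.integral_const_mul, intervalIntegral.integral_div, integral_pow,
        Nat.factorial_succ]
      push_cast
      field_simp
      simp
    rw [← hint]
    refine intervalIntegral.norm_integral_le_of_norm_le x.2.1 (ae_of_all _ fun t ht => ?_)
      (Continuous.intervalIntegrable (by fun_prop) _ _)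
    have htI : t ∈ Icc (0 : ℝ) 1 := ⟨ht.1.le, ht.2.trans x.2.2⟩
    simpa [projIcc_of_mem zero_le_one htI] using ih ⟨t, htI⟩

theorem norm_volterra_pow_le (n : ℕ) (f : C(Icc (0 : ℝ) 1, ℂ)) :
    ‖(volterra ^ n) f‖ ≤ 1 / n.factorial * ‖f‖ :=
  (ContinuousMap.norm_le _ (by positivity)).2 fun x =>
    calc ‖(volterra ^ n) f x‖ ≤ ‖f‖ * ((x : ℝ) ^ n / n.factorial) :=
          norm_volterra_pow_apply_le n f x
      _ ≤ ‖f‖ * (1 / n.factorial) := by gcongr; exact pow_le_one₀ x.2.1 x.2.2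
      _ = 1 / n.factorial * ‖f‖ := mul_comm _ _

/-- The Volterra operator as a bounded operator. -/
noncomputable def volterraCLM : C(Icc (0 : ℝ) 1, ℂ) →L[ℂ] C(Icc (0 : ℝ) 1, ℂ) :=
  volterra.mkContinuous 1 fun f => by simpa using norm_volterra_pow_le 1 f

theorem coe_volterraCLM : ⇑volterraCLM = volterra := rfl

theorem norm_volterraCLM_pow_le (n : ℕ) : ‖volterraCLM ^ n‖ ≤ 1 / n.factorial :=
  ContinuousLinearMap.opNorm_le_bound _ (by positivity) fun f => by
    rw [FunLike.coe_pow_eq_iterate, coe_volterraCLM, ← Module.End.coe_pow]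
    exact norm_volterra_pow_le n f

theorem spectrum_volterraCLM_subset_zero : spectrum ℂ volterraCLM ⊆ {0} :=
  (spectrum_subset_zero_of_norm_pow_le_one_div_factorial (𝕜 := ℂ) (a := volterraCLM)
    norm_volterraCLM_pow_le :)

theorem norm_volterra_le_norm_add_smul_div (f : C(Icc (0 : ℝ) 1, ℂ)) {c : ℝ} (hc : 0 < c) :
    ‖volterra f‖ ≤ ‖f + (c : ℂ) • volterra f‖ / c := by
  let g : ℝ → ℂ := IccExtend zero_le_one (volterra f)
  have hE (t : ℝ) : HasDerivAt (fun t => Real.exp (c * t)) (Real.exp (c * t) * c) t := by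
    simpa using ((hasDerivAt_id t).const_mul c).exp
  have hderiv (t : Icc (0 : ℝ) 1) : HasDerivWithinAt (fun t => Real.exp (c * t) • g t)
      (Real.exp (c * t) • (f + (c : ℂ) • volterra f) t) (Icc 0 1) t := by
    refine ((hE t).hasDerivWithinAt.smul (hasDerivWithinAt_IccExtend_volterra f t)).congr_deriv ?_
    simp [mul_assoc]
  have hbound := image_norm_le_of_norm_deriv_right_le_deriv_boundary
    (f' := fun t => Real.exp (c * t) • IccExtend zero_le_one (f + (c : ℂ) • volterra f) t)
    (B := fun t => Real.exp (c * t) * (‖f + (c : ℂ) • volterra f‖ / c))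
    (fun t ht => (hderiv ⟨t, ht⟩).continuousWithinAt)
    (fun t ht => ?_) ?_ (fun t => (hE t).mul_const _) (fun t _ => ?_)
  · refine (ContinuousMap.norm_le _ (by positivity)).2 fun x => ?_
    have hx := hbound x.2
    rw [norm_smul, Real.norm_of_nonneg (by positivity)] at hx
    simpa [g] using le_of_mul_le_mul_left hx (by positivity)
  · have htI := Ico_subset_Icc_self ht
    rw [IccExtend_of_mem _ _ htI]
    exact (hderiv ⟨t, htI⟩).mono_of_mem_nhdsWithin (Icc_mem_nhdsGE_of_mem ht)
  · have h0 : g 0 = 0 := (IccExtend_left _ _).trans (by simp [volterra_apply])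
    simp only [h0, smul_zero, norm_zero]
    positivity
  · rw [norm_smul, Real.norm_of_nonneg (by positivity), mul_assoc, mul_div_cancel₀ _ hc.ne']
    gcongr
    exact ContinuousMap.norm_coe_le_norm _ _

theorem exists_add_smul_volterra_eq (f : C(Icc (0 : ℝ) 1, ℂ)) {c : ℂ} (hc : c ≠ 0) :
    ∃ r, r + c • volterra r = f := by
  obtain ⟨s, hs⟩ := (isQuasinilpotentOp_iff_spectrum_subset_zero.2
    (ContinuousLinearMap.spectrum_eq.symm.trans_subset spectrum_volterraCLM_subset_zero)
    (-c⁻¹) (by simpa)).surjective (c⁻¹ • f)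
  refine ⟨s, ?_⟩
  replace hs : volterra s - (-c⁻¹) • s = c⁻¹ • f := hs
  rw [← smul_inv_smul₀ hc f, ← hs]
  match_scalars <;> field_simp

theorem range_volterraCLM_subset_closure :
    Set.range volterraCLM ⊆ closure (Set.range (volterraCLM ∘ volterraCLM)) := by
  rintro _ ⟨f, rfl⟩
  refine Metric.mem_closure_range_iff.2 fun ε hε => ?_
  obtain ⟨c, hc⟩ := exists_gt (‖f‖ / ε)
  have hc_pos : 0 < c := (by positivity : 0 ≤ ‖f‖ / ε).trans_lt hc
  obtain ⟨r, hr⟩ := exists_add_smul_volterra_eq f (Complex.ofReal_ne_zero.2 hc_pos.ne')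
  refine ⟨(c : ℂ) • r, ?_⟩
  calc dist (volterra f) (volterra (volterra ((c : ℂ) • r))) = ‖volterra r‖ := by
        rw [dist_eq_norm, ← map_sub, map_smul, ← hr, add_sub_cancel_right]
    _ ≤ ‖f‖ / c := hr ▸ norm_volterra_le_norm_add_smul_div r hc_pos
    _ < ε := (div_lt_comm₀ hε hc_pos).1 hc

end Volterra

theorem mk_le_continuum_of_polishSpace (X : Type u) [TopologicalSpace X] [PolishSpace X] :
    #X ≤ 𝔠 := by
  rcases isEmpty_or_nonempty X with _ | _
  · simp
  obtain ⟨f, -, hf⟩ := PolishSpace.exists_nat_nat_continuous_surjective X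
  simpa using mk_le_of_surjective (f := f ∘ Equiv.ulift) (hf.comp Equiv.ulift.surjective)

theorem similar_to_volterra_of_denseRange_general
    {X : Type*} [NormedAddCommGroup X] [NormedSpace ℂ X] [CompleteSpace X] [Nontrivial X]
    (hcard : #X ≤ 𝔠) (T : X →ₗ[ℂ] X) (hT : Continuous T)
    (hinj : Function.Injective T) (hq : IsQuasinilpotentOp T)
    (hrange : Set.range T ⊆ closure (Set.range (T ∘ T))) :
    ∃ G : X ≃ₗ[ℂ] C(Set.Icc (0:ℝ) 1, ℂ), ∀ x : X, G (T x) = volterra (G x) :=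
  AlgebraicallySimilar.of_range_subset_closure (T := ⟨T, hT⟩) (S := volterraCLM) hcard hinj
    (ContinuousLinearMap.spectrum_eq.trans_subset
      (isQuasinilpotentOp_iff_spectrum_subset_zero.1 hq)) hrange
    (mk_le_continuum_of_polishSpace _) volterra_injective spectrum_volterraCLM_subset_zero
    range_volterraCLM_subset_closure

/-- Corollary 1.3: any injective quasinilpotent bounded linear operator with dense range
on a separable infinite-dimensional complex Banach space is algebraically similar to the
Volterra operator acting on `C[0,1]`. -/
theorem similar_to_volterra_of_denseRange
    {X : Type*} [NormedAddCommGroup X] [NormedSpace ℂ X] [CompleteSpace X]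
    [TopologicalSpace.SeparableSpace X] (hinfdim : ¬ FiniteDimensional ℂ X)
    (T : X →ₗ[ℂ] X) (hT : Continuous T)
    (hinj : Function.Injective T) (hq : IsQuasinilpotentOp T)
    (hdense : DenseRange T) :
    ∃ G : X ≃ₗ[ℂ] C(Set.Icc (0:ℝ) 1, ℂ), ∀ x : X, G (T x) = volterra (G x) := by
  have : Nontrivial X := not_subsingleton_iff_nontrivial.1 fun _ => hinfdim inferInstance
  exact similar_to_volterra_of_denseRange_general (mk_le_continuum_of_polishSpace X) T hT hinj hq
    ((hdense.comp hdense hT).closure_range ▸ subset_univ _)
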